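/- Value iteration converges: for a finite MDP with 0 ≤ γ < 1, let V* : S → ℝ be the unique solution of T V* = V*. Then for every x ∈ S, the sequence n ↦ (T^[n] 0)(x) of iterates of the Bellman optimality operator applied to the zero function tends to V*(x) as n → ∞. -/

import Mathlib

/-!
The Bellman operator is monotone up to discounting: averaging against a probability vector does not
increase a uniform bound `f ≤ g + C`, the factor `γ` shrinks it to `γ * C`, and taking the maximum
over actions preserves it (`bellman_le_add`). Applied in both directions, this makes the operator a
`γ`-contraction in the sup norm. Comparing the orbit of `0` with the fixed point `V*` then gives
`|T^[n] 0 x - V* x| ≤ γ ^ n * ‖V*‖`, which tends to `0`.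
-/

open Filter

/-- Bellman optimality operator `T`. -/
noncomputable def bellman {S A : Type*} [Fintype S] [Fintype A] [Nonempty A]
    (P R : A → S → S → ℝ) (γ : ℝ) (f : S → ℝ) (x : S) : ℝ :=
  Finset.univ.sup' Finset.univ_nonempty
    (fun a : A => ∑ y, P a x y * (R a x y + γ * f y))

/-- One-sided discounting estimate: a uniform upper bound on `f - g` is contracted by `γ`. -/
lemma bellman_le_add {S A : Type*} [Fintype S] [Fintype A] [Nonempty A]
    (P R : A → S → S → ℝ) (γ : ℝ) (hγ0 : 0 ≤ γ)
    (hP0 : ∀ a x y, 0 ≤ P a x y) (hP1 : ∀ a x, ∑ y, P a x y = 1)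
    (f g : S → ℝ) (C : ℝ) (h : ∀ y, f y ≤ g y + C) (x : S) :
    bellman P R γ f x ≤ bellman P R γ g x + γ * C := by
  unfold bellman
  refine Finset.sup'_le _ _ fun a _ => ?_
  calc ∑ y, P a x y * (R a x y + γ * f y)
      ≤ ∑ y, (P a x y * (R a x y + γ * g y) + P a x y * (γ * C)) := by
        refine Finset.sum_le_sum fun y _ => ?_
        rw [← mul_add]
        refine mul_le_mul_of_nonneg_left ?_ (hP0 a x y)
        linarith [mul_le_mul_of_nonneg_left (h y) hγ0]
    _ = ∑ y, P a x y * (R a x y + γ * g y) + γ * C := by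
        rw [Finset.sum_add_distrib, ← Finset.sum_mul, hP1, one_mul]
    _ ≤ _ := by
        gcongr
        exact Finset.le_sup' (fun a : A => ∑ y, P a x y * (R a x y + γ * g y))
          (Finset.mem_univ a)

/-- Value iteration converges: the iterates of the Bellman optimality operator
applied to the zero function converge pointwise to the fixed point `V*`. -/
theorem value_iteration_converges
    {S A : Type*} [Fintype S] [Nonempty S] [Fintype A] [Nonempty A]
    (P R : A → S → S → ℝ) (γ : ℝ) (hγ0 : 0 ≤ γ) (hγ1 : γ < 1)
    (hP0 : ∀ a x y, 0 ≤ P a x y) (hP1 : ∀ a x, ∑ y, P a x y = 1)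
    (Vstar : S → ℝ) (hVstar : bellman P R γ Vstar = Vstar) :
    ∀ x : S, Tendsto (fun n : ℕ => ((bellman P R γ)^[n] (0 : S → ℝ)) x)
      atTop (nhds (Vstar x)) := by
  have bound : ∀ n : ℕ, ∀ x,
      |((bellman P R γ)^[n] (0 : S → ℝ)) x - Vstar x| ≤ γ ^ n * ‖Vstar‖ := by
    intro n
    induction n with
    | zero =>
      intro x
      simpa using norm_le_pi_norm Vstar x
    | succ n ih =>
      intro x
      rw [Function.iterate_succ_apply']
      have h1 := bellman_le_add P R γ hγ0 hP0 hP1 ((bellman P R γ)^[n] 0) Vstar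
        (γ ^ n * ‖Vstar‖) (fun y => by linarith [(abs_le.mp (ih y)).2]) x
      have h2 := bellman_le_add P R γ hγ0 hP0 hP1 Vstar ((bellman P R γ)^[n] 0)
        (γ ^ n * ‖Vstar‖) (fun y => by linarith [(abs_le.mp (ih y)).1]) x
      rw [hVstar] at h1 h2
      have e : γ ^ (n + 1) * ‖Vstar‖ = γ * (γ ^ n * ‖Vstar‖) := by ring
      rw [e, abs_le]
      constructor <;> linarith
  intro x
  rw [tendsto_iff_dist_tendsto_zero]
  refine squeeze_zero (fun _ => dist_nonneg) (fun n => bound n x) ?_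
  simpa using (tendsto_pow_atTop_nhds_zero_of_lt_one hγ0 hγ1).mul_const ‖Vstar‖
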